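/- There exist a constant c > 0 and n₀ such that for all n ≥ n₀, the number of sumsets that lie in ℋ'ₙ satisfies |𝒮ₙ ∩ ℋ'ₙ| ≤ 2^(2^(n−1) − c·2ⁿ). -/

import Mathlib

open Pointwise

/-- `V n` is the vector space `F₂ⁿ`. -/
abbrev V (n : ℕ) : Type := Fin n → ZMod 2

/-- `𝒮ₙ`: the family of sumsets `A + A` for `A ⊆ F₂ⁿ`. -/
def sumsets (n : ℕ) : Finset (Finset (V n)) :=
  Finset.image (fun A : Finset (V n) => A + A) Finset.univ

/-- `v^⊥ = {x : ⟨x, v⟩ = 0}`. -/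
def perp {n : ℕ} (v : V n) : Finset (V n) :=
  Finset.univ.filter (fun x => ∑ i, x i * v i = 0)

/-- `ℋ'ₙ`: subsets of `F₂ⁿ` containing the full complement of a co-dimension 1
linear subspace. -/
def Hfam' (n : ℕ) : Finset (Finset (V n)) :=
  Finset.univ.filter (fun S => ∃ v : V n, v ≠ 0 ∧ Finset.univ \ perp v ⊆ S)

/-!
Split the sumsets `A + A ⊇ F₂ⁿ \ v^⊥` according to the size of `A`. Few sets `A` are small. If `A`
is large, a half `X` of `A` lies in one coset of `v^⊥`, so `X + X ⊆ v^⊥`; adding random translates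
greedily yields `Z ⊆ X` of size `O(2^(n/2))` for which `Z + Z` still has positive density. Then
`A + A` contains the fingerprint `(F₂ⁿ \ v^⊥) ∪ (Z + Z)`, whose density exceeds `1/2` by a constant.
There are only `2^o(2ⁿ)` fingerprints, and each is contained in at most `2^((1/2 - c) 2ⁿ)` sets.
-/

open Finset

section Growth

variable {G : Type*} [Add G] [DecidableEq G]

lemma sum_card_add_singleton_inter_le [IsLeftCancelAdd G] (P X U : Finset G) :
    ∑ x ∈ X, #((P + {x}) ∩ U) ≤ #P * #U := by
  have card_translate_inter_le (x : G) : #((P + {x}) ∩ U) ≤ #{p ∈ P | p + x ∈ U} := by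
    have translate_eq : P + {x} = P.image (· + x) := image₂_singleton_right
    rw [translate_eq, ← filter_mem_eq_inter, filter_image]
    exact card_image_le
  have card_fiber_le (p : G) : #{x ∈ X | p + x ∈ U} ≤ #U :=
    card_le_card_of_injOn (p + ·) (fun _ hx ↦ (mem_filter.1 hx).2) (add_right_injective p).injOn
  calc ∑ x ∈ X, #((P + {x}) ∩ U)
      ≤ ∑ x ∈ X, #{p ∈ P | p + x ∈ U} := sum_le_sum fun x _ ↦ card_translate_inter_le x
    _ = ∑ p ∈ P, #{x ∈ X | p + x ∈ U} :=
        sum_card_bipartiteAbove_eq_sum_card_bipartiteBelow fun x p ↦ p + x ∈ U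
    _ ≤ #P * #U := sum_le_card_nsmul P _ _ fun p _ ↦ card_fiber_le p

lemma exists_card_mul_card_add_singleton_inter_le [IsLeftCancelAdd G] (P U : Finset G)
    {X : Finset G} (hX : X.Nonempty) : ∃ x ∈ X, #X * #((P + {x}) ∩ U) ≤ #P * #U := by
  refine exists_le_of_sum_le hX ?_
  rw [← mul_sum, sum_const, smul_eq_mul]
  exact Nat.mul_le_mul_left _ (sum_card_add_singleton_inter_le P X U)

lemma exists_subset_min_le_two_mul_card_add [IsCancelAdd G] (P X : Finset G) (t : ℕ) :
    ∃ Q ⊆ X, #Q ≤ t ∧ min #X (t * #P) ≤ 2 * #(P + Q) := by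
  induction t with
  | zero => exact ⟨∅, by simp⟩
  | succ t ih =>
    obtain ⟨Q, hQX, hQt, hQ⟩ := ih
    obtain hX | hX := le_or_gt #X (2 * #(P + Q))
    · exact ⟨Q, hQX, by omega, by omega⟩
    obtain ⟨x, hx, hxU⟩ := exists_card_mul_card_add_singleton_inter_le P (P + Q)
      (card_pos.1 (by omega : 0 < #X))
    have half_new : 2 * #((P + {x}) ∩ (P + Q)) ≤ #P := by
      refine Nat.le_of_mul_le_mul_left ?_ (by omega : 0 < #X)
      calc #X * (2 * #((P + {x}) ∩ (P + Q)))
          = 2 * (#X * #((P + {x}) ∩ (P + Q))) := by ring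
        _ ≤ 2 * (#P * #(P + Q)) := by gcongr
        _ = 2 * #(P + Q) * #P := by ring
        _ ≤ #X * #P := by gcongr
    refine ⟨insert x Q, insert_subset hx hQX, (card_insert_le _ _).trans (by omega), ?_⟩
    have card_union := card_union_add_card_inter (P + {x}) (P + Q)
    rw [card_add_singleton] at card_union
    rw [insert_eq, add_union, add_mul, one_mul]
    omega

lemma exists_subset_card_eq_min_le_two_mul_card_add_self [IsCancelAdd G] {X : Finset G} {m : ℕ}
    (hm : 2 * m ≤ #X) : ∃ Z ⊆ X, #Z = 2 * m ∧ min #X (m ^ 2) ≤ 2 * #(Z + Z) := by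
  obtain ⟨P, hPX, hP⟩ := exists_subset_card_eq (by omega : m ≤ #X)
  obtain ⟨Q, hQX, hQm, hQ⟩ := exists_subset_min_le_two_mul_card_add P X m
  have card_union : #(P ∪ Q) ≤ 2 * m := (card_union_le P Q).trans (by omega)
  obtain ⟨Z, hPQZ, hZX, hZ⟩ := exists_subsuperset_card_eq (union_subset hPX hQX) card_union hm
  refine ⟨Z, hZX, hZ, ?_⟩
  rw [sq]
  calc min #X (m * m) ≤ 2 * #(P + Q) := by rwa [hP] at hQ
    _ ≤ 2 * #(Z + Z) := by
      gcongr
      exacts [subset_union_left.trans hPQZ, subset_union_right.trans hPQZ]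

end Growth

section Counting

variable {α : Type*} [Fintype α]

lemma card_filter_card_le_mul_pow_le (M : ℕ) {q : ℕ} (hq : 0 < q) :
    #{A : Finset α | #A ≤ M} * q ^ (Fintype.card α - M) ≤ (q + 1) ^ Fintype.card α := by
  calc #{A : Finset α | #A ≤ M} * q ^ (Fintype.card α - M)
      ≤ ∑ A : Finset α with #A ≤ M, q ^ (Fintype.card α - #A) := by
        rw [← smul_eq_mul]
        refine card_nsmul_le_sum _ _ _ fun A hA ↦ Nat.pow_le_pow_right hq ?_
        exact Nat.sub_le_sub_left (mem_filter.1 hA).2 _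
    _ ≤ ∑ A : Finset α, q ^ (Fintype.card α - #A) := sum_le_sum_of_subset (filter_subset _ _)
    _ = (q + 1) ^ Fintype.card α := by
        simpa [add_comm] using Fintype.sum_pow_mul_eq_add_pow α 1 q

lemma card_filter_card_le_of_card_eq {M : ℕ} (hα : Fintype.card α = 32 * M) :
    #{A : Finset α | #A ≤ M} ≤ 2 ^ (7 * M) := by
  have tail := card_filter_card_le_mul_pow_le (α := α) M (q := 16) (by norm_num)
  rw [hα, show 32 * M - M = 31 * M by omega] at tail
  have pow_le : 17 ^ (32 * M) ≤ 2 ^ (7 * M) * 16 ^ (31 * M) := by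
    simp only [pow_mul, ← mul_pow]
    exact Nat.pow_le_pow_left (by norm_num : 17 ^ 32 ≤ 2 ^ 7 * 16 ^ 31) M
  exact Nat.le_of_mul_le_mul_right (tail.trans pow_le) (by positivity)

lemma card_le_card_mul_two_pow_of_forall_exists_subset {𝒮 𝒰 : Finset (Finset α)} {m : ℕ}
    (h𝒰 : ∀ U ∈ 𝒰, m ≤ #U) (h𝒮 : ∀ S ∈ 𝒮, ∃ U ∈ 𝒰, U ⊆ S) :
    #𝒮 ≤ #𝒰 * 2 ^ (Fintype.card α - m) := by
  classical
  calc #𝒮 ≤ #(𝒰.biUnion (Icc · univ)) := card_le_card fun S hS ↦ by simpa using h𝒮 S hS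
    _ ≤ #𝒰 * 2 ^ (Fintype.card α - m) := card_biUnion_le_card_mul _ _ _ fun U hU ↦ by
        rw [card_Icc_finset (subset_univ U), card_univ]
        exact Nat.pow_le_pow_right two_pos (Nat.sub_le_sub_left (h𝒰 U hU) _)

end Counting

section Parity

/-- The sumsets `A + A` that contain `T` and have a summand `A` with at least `M` elements. -/
def largeSumsets {G : Type*} [Add G] [DecidableEq G] [Fintype G] (M : ℕ) (T : Finset G) :
    Finset (Finset G) :=
  image (fun A ↦ A + A) {A | M ≤ #A ∧ T ⊆ A + A}

lemma exists_subset_card_le_mul_add_self_ker {G K : Type*} [AddZeroClass G] [DecidableEq G]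
    [AddZeroClass K] [Fintype K] (hK : ∀ y : K, y + y = 0) (f : G →+ K) (A : Finset G) :
    ∃ X ⊆ A, #A ≤ #X * Fintype.card K ∧ ∀ z ∈ X + X, f z = 0 := by
  classical
  obtain ⟨y, -, hy⟩ := exists_max_image univ (fun y ↦ #{x ∈ A | f x = y}) univ_nonempty
  refine ⟨{x ∈ A | f x = y}, filter_subset _ _,
    card_le_mul_card_image_of_maps_to (fun x _ ↦ mem_univ (f x)) _ hy, fun z hz ↦ ?_⟩
  obtain ⟨a, ha, b, hb, rfl⟩ := mem_add.1 hz
  rw [map_add, (mem_filter.1 ha).2, (mem_filter.1 hb).2, hK]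

variable {G : Type*} [AddGroup G]

lemma two_mul_card_filter_map_ne_zero [Fintype G] {f : G →+ ZMod 2} (hf : f ≠ 0) :
    2 * #{x | f x ≠ 0} = Fintype.card G := by
  have ne_zero_iff (y : ZMod 2) : y ≠ 0 ↔ y = 1 := by
    revert y
    decide
  obtain ⟨g, hg⟩ := DFunLike.ne_iff.1 hf
  have card_even : #{x | f x = 0} = #{x | f x ≠ 0} := by
    simp only [ne_zero_iff]
    exact AddMonoidHom.card_fiber_eq_of_mem_range f ⟨0, map_zero f⟩ ⟨g, (ne_zero_iff _).1 hg⟩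
  rw [two_mul, ← card_univ, ← card_filter_add_card_filter_not (s := univ) (f · = 0), card_even]

variable [DecidableEq G]

lemma exists_subset_add_self_ker_min_le_card (f : G →+ ZMod 2) {A : Finset G} {m : ℕ}
    (hm : 4 * m ≤ #A) :
    ∃ Z ⊆ A, #Z = 2 * m ∧ (∀ z ∈ Z + Z, f z = 0) ∧ min #A (2 * m ^ 2) ≤ 4 * #(Z + Z) := by
  obtain ⟨X, hXA, hAX, hX⟩ :=
    exists_subset_card_le_mul_add_self_ker CharTwo.add_self_eq_zero f A
  rw [ZMod.card] at hAX
  obtain ⟨Z, hZX, hZ, hZZ⟩ :=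
    exists_subset_card_eq_min_le_two_mul_card_add_self (by omega : 2 * m ≤ #X)
  exact ⟨Z, hZX.trans hXA, hZ, fun z hz ↦ hX z (add_subset_add hZX hZX hz), by omega⟩

variable [Fintype G]

/-- The fingerprints of a parity `f`: sets of at least `|G| / 2 + L` elements that consist of the
odd elements of `G` and all sums of two elements of some `k`-element set. -/
def fingerprints (f : G →+ ZMod 2) (k L : ℕ) : Finset (Finset G) :=
  {U ∈ (powersetCard k univ).image fun Z ↦ ({x | f x ≠ 0} : Finset G) ∪ (Z + Z) |
    Fintype.card G / 2 + L ≤ #U}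

lemma card_fingerprints_le (f : G →+ ZMod 2) (k L : ℕ) :
    #(fingerprints f k L) ≤ Fintype.card G ^ k :=
  calc #(fingerprints f k L) ≤ #(powersetCard k (univ : Finset G)) :=
        (card_filter_le _ _).trans card_image_le
    _ = (Fintype.card G).choose k := card_powersetCard _ _
    _ ≤ Fintype.card G ^ k := Nat.choose_le_pow _ _

lemma exists_fingerprint_subset_add_self {f : G →+ ZMod 2} (hf : f ≠ 0) {m L : ℕ}
    {A : Finset G} (hm : 4 * m ≤ #A) (hL : 4 * L ≤ #A) (hLm : 2 * L ≤ m ^ 2)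
    (hA : ({x | f x ≠ 0} : Finset G) ⊆ A + A) :
    ∃ U ∈ fingerprints f (2 * m) L, U ⊆ A + A := by
  obtain ⟨Z, hZA, hZ, hZker, hZZ⟩ := exists_subset_add_self_ker_min_le_card f hm
  have disjoint_odd : Disjoint ({x | f x ≠ 0} : Finset G) (Z + Z) :=
    disjoint_left.2 fun x hx hxZ ↦ (mem_filter.1 hx).2 (hZker x hxZ)
  refine ⟨_, mem_filter.2 ⟨mem_image_of_mem _ (mem_powersetCard.2 ⟨subset_univ Z, hZ⟩), ?_⟩,
    union_subset hA (add_subset_add hZA hZA)⟩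
  have card_odd := two_mul_card_filter_map_ne_zero hf
  rw [card_union_of_disjoint disjoint_odd]
  omega

lemma card_largeSumsets_le {f : G →+ ZMod 2} (hf : f ≠ 0) {m M L : ℕ} (hm : 4 * m ≤ M)
    (hL : 4 * L ≤ M) (hLm : 2 * L ≤ m ^ 2) :
    #(largeSumsets M ({x | f x ≠ 0} : Finset G)) ≤
      Fintype.card G ^ (2 * m) * 2 ^ (Fintype.card G - (Fintype.card G / 2 + L)) := by
  have exists_fingerprint : ∀ S ∈ largeSumsets M ({x | f x ≠ 0} : Finset G),
      ∃ U ∈ fingerprints f (2 * m) L, U ⊆ S := by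
    refine forall_mem_image.2 fun A hA ↦ ?_
    obtain ⟨-, hMA, hfA⟩ := mem_filter.1 hA
    exact exists_fingerprint_subset_add_self hf (hm.trans hMA) (hL.trans hMA) hLm hfA
  calc #(largeSumsets M ({x | f x ≠ 0} : Finset G))
      ≤ #(fingerprints f (2 * m) L) * 2 ^ (Fintype.card G - (Fintype.card G / 2 + L)) :=
        card_le_card_mul_two_pow_of_forall_exists_subset
          (fun U hU ↦ (mem_filter.1 hU).2) exists_fingerprint
    _ ≤ _ := Nat.mul_le_mul_right _ (card_fingerprints_le f _ _)

end Parity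

section BinarySpace

lemma card_V (n : ℕ) : Fintype.card (V n) = 2 ^ n := by
  rw [Fintype.card_fun, ZMod.card, Fintype.card_fin]

lemma exists_hom_univ_sdiff_perp_eq {n : ℕ} {v : V n} (hv : v ≠ 0) :
    ∃ f : V n →+ ZMod 2, f ≠ 0 ∧ univ \ perp v = ({x | f x ≠ 0} : Finset (V n)) := by
  refine ⟨(dotProductEquiv (ZMod 2) (Fin n) v).toAddMonoidHom, fun h ↦ hv ?_, ?_⟩
  · exact (dotProductEquiv (ZMod 2) (Fin n)).map_eq_zero_iff.1
      (LinearMap.toAddMonoidHom_injective h)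
  · ext x
    simp [perp, dotProduct, mul_comm]

lemma sumsets_inter_Hfam'_subset (n M : ℕ) :
    sumsets n ∩ Hfam' n ⊆ image (fun A ↦ A + A) {A | #A ≤ M} ∪
      ({v | v ≠ 0} : Finset (V n)).biUnion fun v ↦ largeSumsets M (univ \ perp v) := by
  intro S hS
  obtain ⟨hS, hSH⟩ := mem_inter.1 hS
  obtain ⟨A, -, rfl⟩ := mem_image.1 hS
  obtain ⟨-, v, hv, hvA⟩ := mem_filter.1 hSH
  rw [mem_union]
  refine (le_total #A M).imp (fun hA ↦ ?_) fun hA ↦ ?_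
  · exact mem_image_of_mem _ (by simpa using hA)
  · exact mem_biUnion.2 ⟨v, by simpa using hv,
      mem_image_of_mem _ (mem_filter.2 ⟨mem_univ A, hA, hvA⟩)⟩

lemma card_sumsets_inter_Hfam'_le (n : ℕ) {m M L : ℕ} (hm : 4 * m ≤ M) (hL : 4 * L ≤ M)
    (hLm : 2 * L ≤ m ^ 2) :
    #(sumsets n ∩ Hfam' n) ≤
      #{A : Finset (V n) | #A ≤ M} +
        2 ^ n * ((2 ^ n) ^ (2 * m) * 2 ^ (2 ^ n - (2 ^ n / 2 + L))) := by
  refine (card_le_card (sumsets_inter_Hfam'_subset n M)).trans ((card_union_le _ _).trans ?_)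
  refine add_le_add card_image_le ((card_biUnion_le_card_mul _ _ _ fun v hv ↦ ?_).trans
    (Nat.mul_le_mul_right _ ((card_filter_le _ _).trans_eq (card_V n))))
  obtain ⟨f, hf, hfv⟩ := exists_hom_univ_sdiff_perp_eq (mem_filter.1 hv).2
  rw [hfv, ← card_V n]
  exact card_largeSumsets_le hf hm hL hLm

lemma mul_two_pow_half_lt_two_pow {r : ℕ} (hr : 91 ≤ r) :
    (r + 9) * (1 + 2 * 2 ^ ((r + 3) / 2)) < 2 ^ r := by
  have linear_le : r + 9 < 2 ^ (r / 4 + 5) := by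
    have := Nat.lt_two_pow_self (n := r / 4 + 3)
    rw [show r / 4 + 5 = r / 4 + 3 + 2 by omega, pow_succ, pow_succ]
    omega
  have one_add_le : 1 + 2 * 2 ^ ((r + 3) / 2) ≤ 2 ^ ((r + 3) / 2 + 2) := by
    have := Nat.one_le_two_pow (n := (r + 3) / 2)
    rw [pow_add]
    omega
  calc (r + 9) * (1 + 2 * 2 ^ ((r + 3) / 2))
      < 2 ^ (r / 4 + 5) * 2 ^ ((r + 3) / 2 + 2) :=
        Nat.mul_lt_mul_of_lt_of_le linear_le one_add_le (by positivity)
    _ = 2 ^ (r / 4 + 5 + ((r + 3) / 2 + 2)) := (pow_add _ _ _).symm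
    _ ≤ 2 ^ r := Nat.pow_le_pow_right two_pos (by omega)

lemma card_sumsets_inter_Hfam'_le_two_pow {r : ℕ} (hr : 91 ≤ r) :
    #(sumsets (r + 9) ∩ Hfam' (r + 9)) ≤ 2 ^ (255 * 2 ^ r) := by
  -- For `n = r + 9`, sets are large from `M = 2ⁿ / 32` elements on, and fingerprints exceed
  -- `2ⁿ / 2` by `L = 2ⁿ / 256`; the exponent obtained is `2ⁿ / 2 - 2ⁿ / 512`.
  have pow_eq : 2 ^ (r + 9) = 512 * 2 ^ r := by ring
  have hm : 4 * 2 ^ ((r + 3) / 2) ≤ 16 * 2 ^ r := by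
    have : 2 ^ ((r + 3) / 2) ≤ 2 ^ r := Nat.pow_le_pow_right two_pos (by omega)
    omega
  have hLm : 2 * (2 * 2 ^ r) ≤ (2 ^ ((r + 3) / 2)) ^ 2 := by
    rw [← pow_mul, show 2 * (2 * 2 ^ r) = 2 ^ (r + 2) by ring]
    exact Nat.pow_le_pow_right two_pos (by omega)
  have small_le : #{A : Finset (V (r + 9)) | #A ≤ 16 * 2 ^ r} ≤ 2 ^ (255 * 2 ^ r - 1) :=
    (card_filter_card_le_of_card_eq (by rw [card_V]; omega)).trans
      (Nat.pow_le_pow_right two_pos (by omega))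
  have large_le : 2 ^ (r + 9) * ((2 ^ (r + 9)) ^ (2 * 2 ^ ((r + 3) / 2)) *
      2 ^ (2 ^ (r + 9) - (2 ^ (r + 9) / 2 + 2 * 2 ^ r))) ≤ 2 ^ (255 * 2 ^ r - 1) := by
    have := mul_two_pow_half_lt_two_pow hr
    rw [← pow_mul, ← pow_add, ← pow_add, ← add_assoc, ← mul_one_add]
    exact Nat.pow_le_pow_right two_pos (by omega)
  have pos : 0 < 2 ^ r := by positivity
  calc #(sumsets (r + 9) ∩ Hfam' (r + 9))
      ≤ 2 ^ (255 * 2 ^ r - 1) + 2 ^ (255 * 2 ^ r - 1) :=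
        (card_sumsets_inter_Hfam'_le (r + 9) hm (by omega) hLm).trans
          (add_le_add small_le large_le)
    _ = 2 ^ (255 * 2 ^ r) := by
        rw [← two_mul, ← pow_succ', Nat.sub_add_cancel (by omega)]

end BinarySpace

/-- There are `c > 0` and `n₀` with `|𝒮ₙ ∩ ℋ'ₙ| ≤ 2^(2^(n−1) − c·2ⁿ)` for all
`n ≥ n₀`. -/
theorem count_sumsets_in_Hfam' :
    ∃ c : ℝ, 0 < c ∧ ∃ n₀ : ℕ, ∀ n : ℕ, n₀ ≤ n →
      (((sumsets n ∩ Hfam' n).card : ℝ)) ≤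
        2 ^ (((2 ^ (n - 1) : ℕ) : ℝ) - c * 2 ^ n) := by
  refine ⟨1 / 512, by norm_num, 100, fun n hn ↦ ?_⟩
  obtain ⟨r, rfl⟩ := Nat.exists_eq_add_of_le' (by omega : 9 ≤ n)
  have exponent_eq : ((2 ^ (r + 9 - 1) : ℕ) : ℝ) - 1 / 512 * 2 ^ (r + 9) =
      ((255 * 2 ^ r : ℕ) : ℝ) := by
    rw [Nat.add_sub_assoc (by norm_num)]
    push_cast
    ring
  rw [exponent_eq, Real.rpow_natCast]
  exact_mod_cast card_sumsets_inter_Hfam'_le_two_pow (by omega : 91 ≤ r)
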